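/- Approximation-to-the-identity property of the Poisson-type kernel: Let 1 ≤ p < ∞ and F ∈ L^p(ℝ^d; ℝ^{d+1}). Then ‖(ℙ_t ∗ F) − F‖_{L^p(ℝ^d)} → 0 as t → 0⁺. Moreover, (ℙ_t ∗ F)(x) → F(x) as t → 0⁺ at every Lebesgue point x ∈ ℝ^d of F. -/

import Mathlib

open MeasureTheory Filter Set
open scoped ENNReal NNReal Topology

noncomputable section

abbrev Ed (d : ℕ) : Type := EuclideanSpace ℝ (Fin d)

/-- The surface measure `ω_d` of the unit sphere in `ℝ^{d+1}`. -/
def sphereVol (d : ℕ) : ℝ :=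
  ((d : ℝ) + 1) * (volume (Metric.ball (0 : EuclideanSpace ℝ (Fin (d+1))) 1)).toReal

/-- The Poisson kernel `p_t(x)` for the upper half-space `ℝ^d × (0,∞)`. -/
def poissonKernelHalfSpace (d : ℕ) (t : ℝ) (x : Ed d) : ℝ :=
  (2 / sphereVol d) * t / (‖x‖ ^ 2 + t ^ 2) ^ (((d : ℝ) + 1) / 2)

/-- The (componentwise) Poisson integral `u(x,t) = (p_t ∗ f)(x)` of a vector field. -/
def poissonInt (d m : ℕ) (f : Ed d → Ed m) (x : Ed d) (t : ℝ) : Ed m :=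
  ∫ y, poissonKernelHalfSpace d t y • f (x - y)

/-- The vector `(x, t) ∈ ℝ^{d+1}`. -/
def snocVec (d : ℕ) (x : Ed d) (t : ℝ) : Fin (d + 1) → ℝ := Fin.snoc (fun i => x i) t

/-- The entries `𝔭_t^{jk}(x)` of the Poisson-type matrix kernel `ℙ_t`. -/
def pEntry (d : ℕ) (t : ℝ) (j k : Fin (d + 1)) (x : Ed d) : ℝ :=
  (2 * ((d : ℝ) + 1) / sphereVol d) * t * snocVec d x t j *
    snocVec d x t k / (‖x‖ ^ 2 + t ^ 2) ^ (((d : ℝ) + 3) / 2)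

/-- The Poisson-type integral `U(x,t) = (ℙ_t ∗ F)(x)`, the convolution taken in the sense of
matrix–vector multiplication. -/
def pConv (d : ℕ) (t : ℝ) (F : Ed d → Ed (d + 1)) (x : Ed d) : Ed (d + 1) :=
  (EuclideanSpace.equiv (Fin (d + 1)) ℝ).symm
    (fun i => ∫ y, ∑ j, pEntry d t i j y * F (x - y) j)

/-- The field `F = (f, 0) : ℝ^d → ℝ^{d+1}` obtained by appending a zero component. -/
def appendZero (d : ℕ) (f : Ed d → Ed d) : Ed d → Ed (d + 1) :=
  fun y => (EuclideanSpace.equiv (Fin (d + 1)) ℝ).symm (Fin.snoc (fun i => f y i) 0)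


section PartA
open Real

lemma aux_gamma_half3 : Real.Gamma (3/2) = √π / 2 := by
  have h := Real.Gamma_add_one (s := 1/2) (by norm_num)
  rw [Real.Gamma_one_half_eq] at h
  norm_num at h
  rw [h]; ring

lemma aux_gauss1 (s : ℝ) (hs : 0 < s) :
    ∫ x : ℝ, x ^ 2 * rexp (-s * x ^ 2) = √(π / s) / (2 * s) := by
  have h1 := integral_comp_abs (f := fun x : ℝ => x ^ 2 * rexp (-s * x ^ 2))
  simp only [sq_abs] at h1
  rw [h1]
  have h2 := integral_rpow_mul_exp_neg_mul_rpow (p := 2) (q := 2) (b := s)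
    (by norm_num) (by norm_num) hs
  simp only [Real.rpow_two] at h2
  rw [h2]
  rw [show ((2:ℝ)+1)/2 = 3/2 by norm_num, show (-((2:ℝ)+1)/2) = -(1/2) + -1 by norm_num,
    aux_gamma_half3, Real.rpow_add hs, Real.rpow_neg hs.le, Real.rpow_neg_one,
    ← Real.sqrt_eq_rpow, Real.sqrt_div Real.pi_pos.le]
  field_simp
  

lemma aux_prod (d : ℕ) (f : Fin d → ℝ → ℝ) :
    ∫ y : Ed d, ∏ i, f i (y i) = ∏ i, ∫ x, f i x := by
  rw [← integral_fintype_prod_volume_eq_prod]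
  have := (PiLp.volume_preserving_ofLp (Fin d)).integral_comp
    (MeasurableEquiv.toLp 2 (Fin d → ℝ)).symm.measurableEmbedding (fun y : Fin d → ℝ => ∏ i, f i (y i))
  exact this

lemma aux_exp_prod (d : ℕ) (s : ℝ) (y : Ed d) :
    rexp (-s * ‖y‖ ^ 2) = ∏ i, rexp (-s * (y i) ^ 2) := by
  rw [← Real.exp_sum, EuclideanSpace.norm_sq_eq, Finset.mul_sum]
  simp

lemma aux_gaussd (d : ℕ) (s : ℝ) (_hs : 0 < s) :
    ∫ y : Ed d, rexp (-s * ‖y‖ ^ 2) = √(π / s) ^ d := by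
  simp_rw [aux_exp_prod]
  rw [aux_prod d (fun _ x => rexp (-s * x ^ 2))]
  simp_rw [integral_gaussian]
  simp

lemma aux_gaussd2 (d : ℕ) (s : ℝ) (hs : 0 < s) (i : Fin d) :
    ∫ y : Ed d, (y i) ^ 2 * rexp (-s * ‖y‖ ^ 2) = √(π / s) ^ d / (2 * s) := by
  have h : ∀ y : Ed d, (y i) ^ 2 * rexp (-s * ‖y‖ ^ 2)
      = ∏ k, (fun (k : Fin d) (x : ℝ) => (if k = i then x ^ 2 else 1) * rexp (-s * x ^ 2)) k (y k) := by
    intro y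
    rw [aux_exp_prod]
    simp only [Finset.prod_mul_distrib]
    congr 1
    simp
  rw [integral_congr_ae (Eventually.of_forall h),
    aux_prod d (fun (k : Fin d) (x : ℝ) => (if k = i then x ^ 2 else 1) * rexp (-s * x ^ 2))]
  have h2 : ∀ k : Fin d, ∫ x : ℝ, (if k = i then x ^ 2 else 1) * rexp (-s * x ^ 2)
      = √(π / s) * (if k = i then 1 / (2 * s) else 1) := by
    intro k
    split_ifs
    · rw [aux_gauss1 s hs]; ring
    · simp only [one_mul, mul_one]; exact integral_gaussian s
  simp_rw [h2]
  rw [Finset.prod_mul_distrib]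
  simp
  ring

lemma aux_gamma_li (a r : ℝ) (ha : 0 < a) (hr : 0 < r) :
    ∫⁻ s in Ioi (0:ℝ), ENNReal.ofReal (s ^ (a - 1) * rexp (-(r * s)))
      = ENNReal.ofReal ((1 / r) ^ a * Real.Gamma a) := by
  have h := Real.integral_rpow_mul_exp_neg_mul_Ioi ha hr
  have hpos : 0 < (1 / r) ^ a * Real.Gamma a := by
    have := Real.Gamma_pos_of_pos ha
    positivity
  rw [← h, ofReal_integral_eq_lintegral_ofReal]
  · by_contra hc
    have := integral_undef hc
    linarith
  · filter_upwards [ae_restrict_mem measurableSet_Ioi] with s hs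
    have : (0:ℝ) < s := hs
    simp; positivity

lemma aux_fubini (d : ℕ) (Q : Ed d → ℝ) (hQ : Continuous Q) (hQ0 : ∀ y, 0 ≤ Q y)
    (a b c t : ℝ) (ha : 0 < a) (hab : 0 < a - b) (hc : 0 < c) (ht : 0 < t)
    (hG : ∀ s, 0 < s → ∫ y, Q y * rexp (-s * ‖y‖ ^ 2) = c * s ^ (-b)) :
    ∫ y, Q y / (‖y‖ ^ 2 + t ^ 2) ^ a = c * Real.Gamma (a - b) / Real.Gamma a * (t ^ 2) ^ (-(a - b)) := by
  have hΓ := Real.Gamma_pos_of_pos ha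
  have hΓ2 := Real.Gamma_pos_of_pos hab
  have hcont : ∀ y : Ed d, 0 < ‖y‖ ^ 2 + t ^ 2 := fun y => by positivity
  have key : ∫⁻ y, ENNReal.ofReal (Q y / (‖y‖ ^ 2 + t ^ 2) ^ a * Real.Gamma a)
      = ENNReal.ofReal (c * ((1 / t ^ 2) ^ (a - b) * Real.Gamma (a - b))) := by
    calc ∫⁻ y, ENNReal.ofReal (Q y / (‖y‖ ^ 2 + t ^ 2) ^ a * Real.Gamma a)
        = ∫⁻ y, ∫⁻ s in Ioi (0:ℝ), ENNReal.ofReal (Q y) *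
            ENNReal.ofReal (s ^ (a - 1) * rexp (-((‖y‖ ^ 2 + t ^ 2) * s))) := by
          refine lintegral_congr fun y => ?_
          rw [lintegral_const_mul _ (by fun_prop), aux_gamma_li a _ ha (hcont y),
            ← ENNReal.ofReal_mul (hQ0 y), Real.div_rpow zero_le_one (hcont y).le, Real.one_rpow]
          congr 1; ring
      _ = ∫⁻ s in Ioi (0:ℝ), ∫⁻ y, ENNReal.ofReal (Q y) *
            ENNReal.ofReal (s ^ (a - 1) * rexp (-((‖y‖ ^ 2 + t ^ 2) * s))) := by
          refine lintegral_lintegral_swap ?_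
          apply Measurable.aemeasurable
          have := hQ.measurable
          fun_prop
      _ = ∫⁻ s in Ioi (0:ℝ), ENNReal.ofReal c *
            ENNReal.ofReal (s ^ ((a - b) - 1) * rexp (-((t ^ 2) * s))) := by
          refine setLIntegral_congr_fun measurableSet_Ioi fun s hs => ?_
          have hs : 0 < s := hs
          have e1 : ∀ y : Ed d, ENNReal.ofReal (Q y) *
            ENNReal.ofReal (s ^ (a - 1) * rexp (-((‖y‖ ^ 2 + t ^ 2) * s)))
              = ENNReal.ofReal (s ^ (a - 1) * rexp (-(t ^ 2 * s))) *
                ENNReal.ofReal (Q y * rexp (-s * ‖y‖ ^ 2)) := by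
            intro y
            rw [← ENNReal.ofReal_mul (hQ0 y), ← ENNReal.ofReal_mul (by positivity)]
            congr 1
            rw [show -((‖y‖ ^ 2 + t ^ 2) * s) = -(t ^ 2 * s) + (-s * ‖y‖ ^ 2) by ring, Real.exp_add]
            ring
          simp_rw [e1]
          rw [lintegral_const_mul _ (by have := hQ.measurable; fun_prop),
            ← ofReal_integral_eq_lintegral_ofReal, hG s hs, ← ENNReal.ofReal_mul (by positivity),
            ← ENNReal.ofReal_mul hc.le]
          · congr 1
            rw [show a - b - 1 = (a - 1) + (-b) by ring, Real.rpow_add hs]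
            ring
          · by_contra hcc
            have h1 := integral_undef hcc
            rw [hG s hs] at h1
            have : 0 < c * s ^ (-b) := by positivity
            linarith
          · exact Eventually.of_forall fun y => mul_nonneg (hQ0 y) (Real.exp_pos _).le
      _ = _ := by
          rw [lintegral_const_mul _ (by fun_prop), aux_gamma_li _ _ hab (by positivity),
            ← ENNReal.ofReal_mul hc.le]
  have hI : ∫ y, Q y / (‖y‖ ^ 2 + t ^ 2) ^ a * Real.Gamma a
      = c * ((1 / t ^ 2) ^ (a - b) * Real.Gamma (a - b)) := by
    rw [integral_eq_lintegral_of_nonneg_ae, key, ENNReal.toReal_ofReal (by positivity)]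
    · exact Eventually.of_forall fun y => by
        have := hQ0 y; have := hcont y; simp only [Pi.zero_apply]; positivity
    · have := hQ.measurable
      apply Measurable.aestronglyMeasurable
      fun_prop
  rw [integral_mul_const] at hI
  rw [← eq_div_iff hΓ.ne'] at hI
  rw [hI, Real.rpow_neg (by positivity), Real.div_rpow zero_le_one (by positivity), Real.one_rpow]
  ring

lemma sphereVol_eq (d : ℕ) : sphereVol d = (d + 1) * (√π ^ (d + 1) / Real.Gamma (((d:ℝ) + 3) / 2)) := by
  unfold sphereVol
  rw [EuclideanSpace.volume_ball]
  have : Real.Gamma (((d:ℝ) + 3) / 2) > 0 := Real.Gamma_pos_of_pos (by positivity)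
  simp only [ENNReal.ofReal_one, one_pow, one_mul, Fintype.card_fin]
  rw [show ((d + 1 : ℕ) : ℝ) / 2 + 1 = ((d:ℝ) + 3) / 2 by push_cast; ring,
    ENNReal.toReal_ofReal (by positivity)]

lemma sphereVol_pos (d : ℕ) : 0 < sphereVol d := by
  rw [sphereVol_eq]
  have : Real.Gamma (((d:ℝ) + 3) / 2) > 0 := Real.Gamma_pos_of_pos (by positivity)
  positivity

lemma snoc_castSucc (d : ℕ) (x : Ed d) (t : ℝ) (i : Fin d) : snocVec d x t i.castSucc = x i := by
  simp [snocVec]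

lemma snoc_last (d : ℕ) (x : Ed d) (t : ℝ) : snocVec d x t (Fin.last d) = t := by
  simp [snocVec]

lemma sqrt_pi_div_pow (d : ℕ) (s : ℝ) (hs : 0 < s) : √(π / s) ^ d = √π ^ d * s ^ (-((d:ℝ)/2)) := by
  rw [Real.sqrt_div Real.pi_pos.le, div_pow, Real.rpow_neg hs.le, Real.sqrt_eq_rpow s,
    ← Real.rpow_natCast (s ^ (1/2:ℝ)), ← Real.rpow_mul hs.le]
  rw [show (1/2:ℝ) * d = d/2 by ring]; rfl

lemma pEntry_diag (d : ℕ) (t : ℝ) (ht : 0 < t) (i : Fin (d + 1)) :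
    ∫ y, pEntry d t i i y = 1 := by
  have hΓ : Real.Gamma (((d:ℝ) + 3) / 2) > 0 := Real.Gamma_pos_of_pos (by positivity)
  have hpi : 0 < √π := by positivity
  induction i using Fin.lastCases with
  | last =>
    have h := aux_fubini d (fun _ => 1) continuous_const (fun _ => zero_le_one)
      (((d:ℝ) + 3) / 2) ((d:ℝ)/2) (√π ^ d) t (by positivity) (by linarith) (by positivity) ht
      (fun s hs => by simp only [one_mul]; rw [aux_gaussd d s hs, sqrt_pi_div_pow d s hs])
    have e : ∀ y, pEntry d t (Fin.last d) (Fin.last d) y =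
      (2 * ((d : ℝ) + 1) / sphereVol d * t ^ 3) * (1 / (‖y‖ ^ 2 + t ^ 2) ^ (((d:ℝ) + 3) / 2)) := by
      intro y; simp only [pEntry, snoc_last]; ring
    simp_rw [e]
    rw [integral_const_mul, h, sphereVol_eq,
      show ((d:ℝ) + 3) / 2 - (d:ℝ)/2 = 3/2 by ring, aux_gamma_half3, ← Real.rpow_natCast t 2,
      ← Real.rpow_mul ht.le, show ((2:ℕ):ℝ) * -(3/2) = -((3:ℕ):ℝ) by norm_num, Real.rpow_neg ht.le,
      Real.rpow_natCast]
    field_simp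
    ring
  | cast i =>
    have h := aux_fubini d (fun y => (y i) ^ 2) (by fun_prop) (fun _ => sq_nonneg _)
      (((d:ℝ) + 3) / 2) ((d:ℝ)/2 + 1) (√π ^ d / 2) t (by positivity) (by linarith) (by positivity) ht
      (fun s hs => by
        rw [aux_gaussd2 d s hs, sqrt_pi_div_pow d s hs, neg_add, Real.rpow_add hs, Real.rpow_neg_one]
        field_simp)
    have e : ∀ y, pEntry d t i.castSucc i.castSucc y =
      (2 * ((d : ℝ) + 1) / sphereVol d * t) * ((y i) ^ 2 / (‖y‖ ^ 2 + t ^ 2) ^ (((d:ℝ) + 3) / 2)) := by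
      intro y; simp only [pEntry, snoc_castSucc]; ring
    simp_rw [e]
    rw [integral_const_mul, h, sphereVol_eq,
      show ((d:ℝ) + 3) / 2 - ((d:ℝ)/2 + 1) = 1/2 by ring, Real.Gamma_one_half_eq,
      ← Real.rpow_natCast t 2,
      ← Real.rpow_mul ht.le, show ((2:ℕ):ℝ) * -(1/2) = -1 by norm_num, Real.rpow_neg_one]
    field_simp
    ring

lemma pEntry_symm (d : ℕ) (t : ℝ) (i j : Fin (d + 1)) (y : Ed d) :
    pEntry d t i j y = pEntry d t j i y := by
  simp only [pEntry]; ring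

lemma pEntry_off' (d : ℕ) (t : ℝ) (i : Fin d) (j : Fin (d + 1)) (hij : j ≠ i.castSucc) :
    ∫ y, pEntry d t i.castSucc j y = 0 := by
  let R : Ed d ≃ₗᵢ[ℝ] Ed d := LinearIsometryEquiv.piLpCongrRight 2
    (fun k => if k = i then LinearIsometryEquiv.neg ℝ else LinearIsometryEquiv.refl ℝ ℝ)
  have hR : ∀ y k, R y k = if k = i then - y k else y k := by
    intro y k
    simp only [R, LinearIsometryEquiv.piLpCongrRight_apply]
    split_ifs <;> simp
  have h1 := R.measurePreserving.integral_comp R.toHomeomorph.measurableEmbedding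
    (fun y => pEntry d t i.castSucc j y)
  have h2 : ∀ y, pEntry d t i.castSucc j (R y) = - pEntry d t i.castSucc j y := by
    intro y
    have hj : snocVec d (R y) t j = snocVec d y t j := by
      induction j using Fin.lastCases with
      | last => simp [snoc_last]
      | cast j =>
        have : j ≠ i := fun h => hij (by rw [h])
        simp [snoc_castSucc, hR, this]
    simp only [pEntry, hj, snoc_castSucc, hR, R.norm_map]
    simp
    ring
  simp_rw [h2] at h1
  rw [integral_neg] at h1
  linarith

lemma pEntry_int (d : ℕ) (t : ℝ) (ht : 0 < t) (i j : Fin (d + 1)) :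
    ∫ y, pEntry d t i j y = if i = j then 1 else 0 := by
  split_ifs with h
  · subst h; exact pEntry_diag d t ht i
  · induction i using Fin.lastCases with
    | cast i => exact pEntry_off' d t i j (Ne.symm h)
    | last =>
      induction j using Fin.lastCases with
      | last => exact absurd rfl h
      | cast j => simp_rw [pEntry_symm d t (Fin.last d)]; exact pEntry_off' d t j _ h

end PartA

section PartB

/-- scalar majorant of the kernel -/
def phi (d : ℕ) (t : ℝ) (y : Ed d) : ℝ := t / (‖y‖ ^ 2 + t ^ 2) ^ (((d : ℝ) + 1) / 2)

lemma phi_nonneg (d : ℕ) (t : ℝ) (ht : 0 < t) (y : Ed d) : 0 ≤ phi d t y := by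
  unfold phi; positivity

lemma phi_meas (d : ℕ) (t : ℝ) : Measurable (phi d t) := by
  unfold phi; fun_prop

lemma pEntry_meas (d : ℕ) (t : ℝ) (i j : Fin (d + 1)) : Measurable (pEntry d t i j) := by
  have h : ∀ i, Measurable (fun y => snocVec d y t i) := by
    intro i
    induction i using Fin.lastCases with
    | last => simp only [snoc_last]; fun_prop
    | cast i => simp only [snoc_castSucc]; fun_prop
  have h1 := h i
  have h2 := h j
  unfold pEntry; fun_prop

lemma snoc_sq_sum (d : ℕ) (y : Ed d) (t : ℝ) : ∑ i, snocVec d y t i ^ 2 = ‖y‖ ^ 2 + t ^ 2 := by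
  rw [Fin.sum_univ_castSucc, EuclideanSpace.norm_sq_eq]
  simp [snoc_castSucc, snoc_last]

lemma snoc_sq_le (d : ℕ) (y : Ed d) (t : ℝ) (i : Fin (d + 1)) :
    snocVec d y t i ^ 2 ≤ ‖y‖ ^ 2 + t ^ 2 := by
  rw [← snoc_sq_sum]
  exact Finset.single_le_sum (f := fun i => snocVec d y t i ^ 2) (fun _ _ => sq_nonneg _)
    (Finset.mem_univ i)

/-- kernel constant -/
def kc (d : ℕ) : ℝ := 2 * ((d : ℝ) + 1) / sphereVol d

lemma kc_pos (d : ℕ) : 0 < kc d := by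
  have := sphereVol_pos d
  unfold kc; positivity

lemma pEntry_eq (d : ℕ) (t : ℝ) (ht : 0 < t) (i j : Fin (d + 1)) (y : Ed d) :
    pEntry d t i j y = kc d * phi d t y * (snocVec d y t i * snocVec d y t j / (‖y‖ ^ 2 + t ^ 2)) := by
  have hN : 0 < ‖y‖ ^ 2 + t ^ 2 := by positivity
  unfold pEntry phi
  rw [show ((d:ℝ) + 3) / 2 = ((d:ℝ) + 1) / 2 + 1 by ring, Real.rpow_add hN, Real.rpow_one]
  unfold kc
  field_simp

lemma pEntry_abs_le (d : ℕ) (t : ℝ) (ht : 0 < t) (i j : Fin (d + 1)) (y : Ed d) :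
    |pEntry d t i j y| ≤ kc d * phi d t y := by
  have hN : 0 < ‖y‖ ^ 2 + t ^ 2 := by positivity
  have h0 : 0 ≤ kc d * phi d t y := mul_nonneg (kc_pos d).le (phi_nonneg d t ht y)
  rw [pEntry_eq d t ht, abs_mul, abs_of_nonneg h0, abs_div, abs_of_pos hN]
  refine mul_le_of_le_one_right h0 ?_
  rw [div_le_one hN, abs_le]
  have h1 := snoc_sq_le d y t i
  have h2 := snoc_sq_le d y t j
  constructor
  · nlinarith [sq_nonneg (snocVec d y t i + snocVec d y t j)]
  · nlinarith [sq_nonneg (snocVec d y t i - snocVec d y t j)]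

lemma phi_eq_sum (d : ℕ) (t : ℝ) (ht : 0 < t) (y : Ed d) :
    phi d t y = (kc d)⁻¹ * ∑ i, pEntry d t i i y := by
  have hN : 0 < ‖y‖ ^ 2 + t ^ 2 := by positivity
  have hk := kc_pos d
  simp_rw [pEntry_eq d t ht]
  rw [← Finset.mul_sum, ← Finset.sum_div]
  simp_rw [← sq]
  rw [snoc_sq_sum]
  field_simp

lemma pEntry_diag_integrable (d : ℕ) (t : ℝ) (ht : 0 < t) (i : Fin (d + 1)) :
    Integrable (pEntry d t i i) := by
  by_contra hc
  have h := integral_undef hc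
  rw [pEntry_diag d t ht] at h
  exact one_ne_zero h

lemma phi_integrable (d : ℕ) (t : ℝ) (ht : 0 < t) : Integrable (phi d t) := by
  have : phi d t = fun y => (kc d)⁻¹ * ∑ i, pEntry d t i i y := funext (phi_eq_sum d t ht)
  rw [this]
  exact (integrable_finsetSum _ fun i _ => pEntry_diag_integrable d t ht i).const_mul _

lemma pEntry_integrable (d : ℕ) (t : ℝ) (ht : 0 < t) (i j : Fin (d + 1)) :
    Integrable (pEntry d t i j) :=
  ((phi_integrable d t ht).const_mul (kc d)).mono' (pEntry_meas d t i j).aestronglyMeasurable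
    (Eventually.of_forall fun y => pEntry_abs_le d t ht i j y)

/-- total mass of the majorant -/
def phiMass (d : ℕ) : ℝ≥0∞ := ENNReal.ofReal ((kc d)⁻¹ * (d + 1))

lemma phi_lintegral (d : ℕ) (t : ℝ) (ht : 0 < t) :
    ∫⁻ y, ENNReal.ofReal (phi d t y) = phiMass d := by
  rw [← ofReal_integral_eq_lintegral_ofReal (phi_integrable d t ht)
    (Eventually.of_forall (phi_nonneg d t ht))]
  unfold phiMass
  congr 1
  simp_rw [phi_eq_sum d t ht]
  rw [integral_const_mul, integral_finsetSum _ fun i _ => pEntry_diag_integrable d t ht i]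
  simp [pEntry_diag d t ht]

lemma phi_le (d : ℕ) (t : ℝ) (ht : 0 < t) (y : Ed d) :
    phi d t y ≤ t / (t ^ 2) ^ (((d : ℝ) + 1) / 2) := by
  unfold phi
  gcongr
  nlinarith [sq_nonneg ‖y‖]

lemma phi_mul_integrable (d : ℕ) (t : ℝ) (ht : 0 < t) (p : ℝ) (hp : 1 ≤ p) {m : ℕ}
    (F : Ed d → Ed m) (hF : MemLp F (ENNReal.ofReal p) volume) (x : Ed d) :
    Integrable (fun y => phi d t y * ‖F (x - y)‖) := by
  have h1 := hF.integrable_norm_rpow (by simpa using by linarith) ENNReal.ofReal_ne_top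
  rw [ENNReal.toReal_ofReal (by linarith)] at h1
  have h2 := h1.comp_sub_left x
  set K := t / (t ^ 2) ^ (((d : ℝ) + 1) / 2)
  have hms : AEStronglyMeasurable (fun y => F (x - y)) volume :=
    hF.aestronglyMeasurable.comp_quasiMeasurePreserving
      (quasiMeasurePreserving_sub_left volume x)
  refine ((phi_integrable d t ht).add (h2.const_mul K)).mono'
    ((phi_meas d t).aestronglyMeasurable.mul hms.norm) (Eventually.of_forall fun y => ?_)
  have hφ := phi_nonneg d t ht y
  have hφ2 : phi d t y ≤ K := phi_le d t ht y
  have hn := norm_nonneg (F (x - y))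
  rw [Real.norm_of_nonneg (mul_nonneg hφ hn)]
  simp only [Pi.add_apply]
  by_cases h : ‖F (x - y)‖ ≤ 1
  · have : 0 ≤ K * ‖F (x - y)‖ ^ p := mul_nonneg (hφ.trans hφ2) (by positivity)
    nlinarith
  · push Not at h
    have h3 : ‖F (x - y)‖ ≤ ‖F (x - y)‖ ^ p := Real.self_le_rpow_of_one_le h.le hp
    have : phi d t y * ‖F (x - y)‖ ≤ K * ‖F (x - y)‖ ^ p :=
      mul_le_mul hφ2 h3 hn (hφ.trans hφ2)
    linarith

lemma phi_mul_integrable' (d : ℕ) (t : ℝ) (ht : 0 < t) (p : ℝ) (hp : 1 ≤ p) {m : ℕ}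
    (F : Ed d → Ed m) (hF : MemLp F (ENNReal.ofReal p) volume) (x : Ed d) :
    Integrable (fun y => phi d t y * ‖F (x - y) - F x‖) := by
  have hms : AEStronglyMeasurable (fun y => F (x - y)) volume :=
    hF.aestronglyMeasurable.comp_quasiMeasurePreserving
      (quasiMeasurePreserving_sub_left volume x)
  refine ((phi_mul_integrable d t ht p hp F hF x).add ((phi_integrable d t ht).mul_const ‖F x‖)).mono'
    ((phi_meas d t).aestronglyMeasurable.mul (hms.sub aestronglyMeasurable_const).norm)
    (Eventually.of_forall fun y => ?_)
  have hφ := phi_nonneg d t ht y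
  rw [Real.norm_of_nonneg (mul_nonneg hφ (norm_nonneg _))]
  simp only [Pi.add_apply]
  rw [← mul_add]
  exact mul_le_mul_of_nonneg_left (norm_sub_le _ _) hφ

lemma key_est (d : ℕ) (t : ℝ) (ht : 0 < t) (p : ℝ) (hp : 1 ≤ p)
    (F : Ed d → Ed (d + 1)) (hF : MemLp F (ENNReal.ofReal p) volume) (x : Ed d) :
    ‖pConv d t F x - F x‖ₑ ≤ ENNReal.ofReal ((d + 1) * ((d + 1) * kc d)) *
      ∫⁻ y, ENNReal.ofReal (phi d t y) * ‖F (x - y) - F x‖ₑ := by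
  have hI := phi_mul_integrable' d t ht p hp F hF x
  have hms : AEStronglyMeasurable (fun y => F (x - y)) volume :=
    hF.aestronglyMeasurable.comp_quasiMeasurePreserving
      (quasiMeasurePreserving_sub_left volume x)
  have hk := kc_pos d
  have e1 : ∫⁻ y, ENNReal.ofReal (phi d t y) * ‖F (x - y) - F x‖ₑ
      = ENNReal.ofReal (∫ y, phi d t y * ‖F (x - y) - F x‖) := by
    rw [ofReal_integral_eq_lintegral_ofReal hI (Eventually.of_forall fun y =>
      mul_nonneg (phi_nonneg d t ht y) (norm_nonneg _))]
    refine lintegral_congr fun y => ?_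
    rw [ENNReal.ofReal_mul (phi_nonneg d t ht y), ofReal_norm]
  rw [e1, ← ENNReal.ofReal_mul (by positivity), ← ofReal_norm]
  apply ENNReal.ofReal_le_ofReal
  set B := ∫ y, phi d t y * ‖F (x - y) - F x‖
  have hB : 0 ≤ B := integral_nonneg fun y => mul_nonneg (phi_nonneg d t ht y) (norm_nonneg _)
  have hcomp : ∀ (v : Ed (d + 1)) i, |v i| ≤ ‖v‖ := fun v i => by
    simpa using PiLp.norm_apply_le v i
  have hpF : ∀ i j, Integrable (fun y => pEntry d t i j y * F (x - y) j) := by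
    intro i j
    refine ((phi_mul_integrable d t ht p hp F hF x).const_mul (kc d)).mono'
      ((pEntry_meas d t i j).aestronglyMeasurable.mul
        ((EuclideanSpace.proj (𝕜 := ℝ) j).continuous.comp_aestronglyMeasurable hms))
      (Eventually.of_forall fun y => ?_)
    rw [norm_mul, ← mul_assoc]
    exact mul_le_mul (pEntry_abs_le d t ht i j y) (hcomp _ _) (norm_nonneg _)
      (mul_nonneg hk.le (phi_nonneg d t ht y))
  have hcoord : ∀ i, |(pConv d t F x - F x) i| ≤ (d + 1) * kc d * B := by
    intro i
    have e2 : (pConv d t F x - F x) i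
        = ∫ y, ∑ j, pEntry d t i j y * (F (x - y) - F x) j := by
      have e3 : F x i = ∫ y, ∑ j, pEntry d t i j y * F x j := by
        rw [integral_finsetSum _ fun j _ => (pEntry_integrable d t ht i j).mul_const _]
        simp_rw [integral_mul_const, pEntry_int d t ht]
        simp
      have e4 : (pConv d t F x) i = ∫ y, ∑ j, pEntry d t i j y * F (x - y) j := rfl
      rw [PiLp.sub_apply, e4, e3, ← integral_sub]
      · congr 1; ext y
        rw [← Finset.sum_sub_distrib]
        refine Finset.sum_congr rfl fun j _ => ?_
        rw [PiLp.sub_apply]; ring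
      · exact integrable_finsetSum _ fun j _ => hpF i j
      · exact integrable_finsetSum _ fun j _ => (pEntry_integrable d t ht i j).mul_const _
    rw [e2, ← Real.norm_eq_abs]
    refine (norm_integral_le_of_norm_le (hI.const_mul ((d + 1) * kc d))
      (Eventually.of_forall fun y => ?_)).trans (by rw [integral_const_mul])
    refine (norm_sum_le _ _).trans ?_
    have : ∀ j ∈ Finset.univ, ‖pEntry d t i j y * (F (x - y) - F x) j‖
        ≤ kc d * phi d t y * ‖F (x - y) - F x‖ := by
      intro j _
      rw [norm_mul]
      exact mul_le_mul (pEntry_abs_le d t ht i j y) (hcomp _ _) (norm_nonneg _)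
        (mul_nonneg hk.le (phi_nonneg d t ht y))
    refine (Finset.sum_le_sum this).trans (le_of_eq ?_)
    simp; ring
  set v := pConv d t F x - F x
  have hb : 0 ≤ (d + 1) * kc d * B := by positivity
  have : ‖v‖ ^ 2 ≤ ((d + 1) * (((d + 1) * kc d * B))) ^ 2 := by
    rw [EuclideanSpace.norm_sq_eq]
    have h1 : ∀ i ∈ Finset.univ, ‖v i‖ ^ 2 ≤ ((d + 1) * kc d * B) ^ 2 := fun i _ =>
      pow_le_pow_left₀ (norm_nonneg _) (hcoord i) 2
    refine (Finset.sum_le_sum h1).trans ?_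
    simp only [Finset.sum_const, Finset.card_univ, Fintype.card_fin, nsmul_eq_mul]
    push_cast
    rw [mul_pow ((d:ℝ) + 1)]
    refine mul_le_mul_of_nonneg_right ?_ (sq_nonneg _)
    have : (0:ℝ) ≤ d := by positivity
    nlinarith
  have h2 := abs_le_of_sq_le_sq this (by positivity)
  have h3 := (le_abs_self _).trans h2
  linarith

end PartB

section PartC

lemma tendsto_phi (d : ℕ) (h : Ed d → ℝ≥0∞)
    (hfin : ∫⁻ y, ENNReal.ofReal (phi d 1 y) * h y ≠ ⊤)
    (hloc : ∀ ε : ℝ≥0∞, 0 < ε → ∃ δ : ℝ, 0 < δ ∧ δ ≤ 1 ∧ ∀ t : ℝ, 0 < t →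
      ∫⁻ y in Metric.ball (0 : Ed d) δ, ENNReal.ofReal (phi d t y) * h y ≤ ε) :
    Tendsto (fun t => ∫⁻ y, ENNReal.ofReal (phi d t y) * h y) (𝓝[>] (0:ℝ)) (𝓝 0) := by
  rw [ENNReal.tendsto_nhds_zero]
  intro ε hε
  obtain ⟨δ, hδ, hδ1, hl⟩ := hloc (ε / 2) (ENNReal.half_pos hε.ne')
  set K : ℝ := (2 / δ ^ 2) ^ (((d : ℝ) + 1) / 2)
  have hK : 0 < K := by positivity
  have hout : ∀ t : ℝ, 0 < t → ∫⁻ y in (Metric.ball (0 : Ed d) δ)ᶜ, ENNReal.ofReal (phi d t y) * h y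
      ≤ ENNReal.ofReal (t * K) * ∫⁻ y, ENNReal.ofReal (phi d 1 y) * h y := by
    intro t ht
    calc _ ≤ ∫⁻ y in (Metric.ball (0 : Ed d) δ)ᶜ,
          ENNReal.ofReal (t * K) * (ENNReal.ofReal (phi d 1 y) * h y) := by
          refine setLIntegral_mono' Metric.isOpen_ball.measurableSet.compl fun y hy => ?_
          rw [← mul_assoc, ← ENNReal.ofReal_mul (by positivity)]
          gcongr
          have hy' : δ ≤ ‖y‖ := by simpa using hy
          have hyp : 0 < ‖y‖ := hδ.trans_le hy'
          unfold phi
          have h1 : ‖y‖ ^ 2 + 1 ^ 2 ≤ (2 / δ ^ 2) * (‖y‖ ^ 2 + t ^ 2) := by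
            rw [div_mul_eq_mul_div, le_div_iff₀ (by positivity)]
            have : δ ^ 2 ≤ ‖y‖ ^ 2 := by gcongr
            have : δ ^ 2 ≤ 1 := by nlinarith
            nlinarith [sq_nonneg t, sq_nonneg ‖y‖]
          have h2 : (‖y‖ ^ 2 + 1 ^ 2) ^ (((d : ℝ) + 1) / 2)
              ≤ K * (‖y‖ ^ 2 + t ^ 2) ^ (((d : ℝ) + 1) / 2) := by
            rw [← Real.mul_rpow (by positivity) (by positivity)]
            gcongr
          rw [mul_one_div, div_le_div_iff₀ (by positivity) (by positivity)]
          nlinarith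
      _ ≤ ∫⁻ y, ENNReal.ofReal (t * K) * (ENNReal.ofReal (phi d 1 y) * h y) :=
          setLIntegral_le_lintegral _ _
      _ = _ := lintegral_const_mul' _ _ ENNReal.ofReal_ne_top
  have htend : Tendsto (fun t : ℝ => ENNReal.ofReal (t * K) *
      ∫⁻ y, ENNReal.ofReal (phi d 1 y) * h y) (𝓝[>] (0:ℝ)) (𝓝 0) := by
    have h1 : Tendsto (fun t : ℝ => ENNReal.ofReal (t * K)) (𝓝[>] (0:ℝ)) (𝓝 0) := by
      have : Tendsto (fun t : ℝ => ENNReal.ofReal (t * K)) (𝓝 (0:ℝ)) (𝓝 (ENNReal.ofReal (0 * K))) :=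
        (ENNReal.continuous_ofReal.comp (by fun_prop : Continuous fun t : ℝ => t * K)).tendsto 0
      simp only [zero_mul, ENNReal.ofReal_zero] at this
      exact this.mono_left nhdsWithin_le_nhds
    have := ENNReal.Tendsto.mul_const h1 (Or.inr hfin)
    simpa using this
  rw [ENNReal.tendsto_nhds_zero] at htend
  filter_upwards [htend (ε / 2) (ENNReal.half_pos hε.ne'), self_mem_nhdsWithin] with t h1 h2
  rw [← lintegral_add_compl _ (Metric.isOpen_ball (x := (0 : Ed d)) (ε := δ)).measurableSet]
  exact (add_le_add (hl t h2) ((hout t h2).trans h1)).trans (ENNReal.add_halves ε).le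

lemma phi_le_of_sq_le (d : ℕ) (t a : ℝ) (ht : 0 < t) (ha : 0 < a) (y : Ed d)
    (h : a ^ 2 ≤ ‖y‖ ^ 2 + t ^ 2) : phi d t y ≤ t / a ^ (d + 1) := by
  unfold phi
  have : a ^ (d + 1) = (a ^ 2) ^ (((d : ℝ) + 1) / 2) := by
    rw [← Real.rpow_natCast a 2, ← Real.rpow_mul ha.le, ← Real.rpow_natCast]
    congr 1; push_cast; ring
  rw [this]
  gcongr

lemma exists_dyadic (t r : ℝ) (ht : 0 < t) :
    ∃ k : ℕ, r < 2 ^ k * t ∧ (2 ^ k * t / 2) ^ 2 ≤ r ^ 2 + t ^ 2 := by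
  have hex : ∃ k : ℕ, r < 2 ^ k * t := by
    obtain ⟨k, hk⟩ := pow_unbounded_of_one_lt (r / t) (one_lt_two)
    exact ⟨k, (div_lt_iff₀ ht).1 hk⟩
  classical
  refine ⟨Nat.find hex, Nat.find_spec hex, ?_⟩
  rcases hk : Nat.find hex with _ | k
  · nlinarith [sq_nonneg r, sq_nonneg t]
  · have := Nat.find_min hex (m := k) (by omega)
    push Not at this
    rw [show (2:ℝ) ^ (k + 1) * t / 2 = 2 ^ k * t by ring]
    have : (2 ^ k * t) ^ 2 ≤ r ^ 2 := by gcongr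
    nlinarith [sq_nonneg t]

lemma dyadic_bound (d : ℕ) (h : Ed d → ℝ≥0∞) (hm : AEMeasurable h volume) (δ : ℝ) (hδ : 0 < δ)
    (ε : ℝ≥0∞)
    (hb : ∀ r : ℝ, 0 < r → r ≤ δ → ∫⁻ y in Metric.ball (0 : Ed d) r, h y ≤ ε * ENNReal.ofReal (r ^ d))
    (t : ℝ) (ht : 0 < t) :
    ∫⁻ y in Metric.ball (0 : Ed d) δ, ENNReal.ofReal (phi d t y) * h y
      ≤ ε * ENNReal.ofReal (2 ^ (d + 2)) := by
  set c : ℕ → ℝ := fun k => t / (2 ^ k * t / 2) ^ (d + 1)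
  set B : ℕ → Set (Ed d) := fun k => Metric.ball (0 : Ed d) (min (2 ^ k * t) δ)
  have hBm : ∀ k, MeasurableSet (B k) := fun k => Metric.isOpen_ball.measurableSet
  calc ∫⁻ y in Metric.ball (0 : Ed d) δ, ENNReal.ofReal (phi d t y) * h y
      ≤ ∫⁻ y in Metric.ball (0 : Ed d) δ, ∑' k, ENNReal.ofReal (c k) * (B k).indicator h y := by
        refine setLIntegral_mono' Metric.isOpen_ball.measurableSet fun y hy => ?_
        obtain ⟨k, hk1, hk2⟩ := exists_dyadic t ‖y‖ ht
        refine le_trans ?_ (ENNReal.le_tsum k)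
        have : y ∈ B k := by
          simp only [B, mem_ball_zero_iff, lt_min_iff]
          exact ⟨hk1, by simpa using hy⟩
        rw [Set.indicator_of_mem this]
        gcongr
        exact phi_le_of_sq_le d t _ ht (by positivity) y hk2
    _ ≤ ∫⁻ y, ∑' k, ENNReal.ofReal (c k) * (B k).indicator h y := setLIntegral_le_lintegral _ _
    _ = ∑' k, ENNReal.ofReal (c k) * ∫⁻ y in B k, h y := by
        rw [lintegral_tsum fun k => (hm.indicator (hBm k)).const_mul _]
        congr 1; ext k
        rw [lintegral_const_mul' _ _ ENNReal.ofReal_ne_top, lintegral_indicator (hBm k)]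
    _ ≤ ∑' k : ℕ, ε * ENNReal.ofReal (2 ^ (d + 1) * (1 / 2) ^ k) := by
        refine ENNReal.tsum_le_tsum fun k => ?_
        have hmin : 0 < min (2 ^ k * t) δ := lt_min (by positivity) hδ
        calc _ ≤ ENNReal.ofReal (c k) * (ε * ENNReal.ofReal ((min (2 ^ k * t) δ) ^ d)) := by
              gcongr
              exact hb _ hmin (min_le_right _ _)
          _ ≤ ENNReal.ofReal (c k) * (ε * ENNReal.ofReal ((2 ^ k * t) ^ d)) := by
              gcongr
              exact min_le_left _ _
          _ = ε * ENNReal.ofReal (c k * (2 ^ k * t) ^ d) := by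
              rw [ENNReal.ofReal_mul (by positivity)]; ring
          _ = _ := by
              congr 2
              simp only [c]
              rw [div_pow, pow_succ (2 ^ k * t), one_div, inv_pow]
              field_simp
    _ = _ := by
        rw [ENNReal.tsum_mul_left, ← ENNReal.ofReal_tsum_of_nonneg (fun k => by positivity)
          (summable_geometric_two.mul_left _), tsum_mul_left, tsum_geometric_two]
        congr 2

end PartC

section PartD

lemma phi_lintegral_ne_top (d : ℕ) (t : ℝ) (ht : 0 < t) (p : ℝ) (hp : 1 ≤ p) {m : ℕ}
    (F : Ed d → Ed m) (hF : MemLp F (ENNReal.ofReal p) volume) (x : Ed d) :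
    ∫⁻ y, ENNReal.ofReal (phi d t y) * ‖F (x - y) - F x‖ₑ ≠ ⊤ := by
  have h := (phi_mul_integrable' d t ht p hp F hF x).lintegral_lt_top
  refine ne_of_lt (lt_of_le_of_lt (le_of_eq ?_) h)
  refine lintegral_congr fun y => ?_
  rw [ENNReal.ofReal_mul (phi_nonneg d t ht y), ofReal_norm]

lemma ball_shift (d : ℕ) {m : ℕ} (F : Ed d → Ed m) (x : Ed d) (r : ℝ) :
    ∫⁻ y in Metric.ball (0 : Ed d) r, ‖F (x - y) - F x‖ₑ
      = ∫⁻ y in Metric.ball x r, ‖F y - F x‖ₑ := by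
  have hmp := Measure.measurePreserving_sub_left (volume : Measure (Ed d)) x
  have h := hmp.setLIntegral_comp_preimage_emb
    (MeasurableEquiv.subLeft x).measurableEmbedding (fun y => ‖F y - F x‖ₑ) (Metric.ball x r)
  rw [← h]
  congr 2
  ext y
  simp [dist_eq_norm]

lemma lebesgue_point (d : ℕ) (p : ℝ) (hp : 1 ≤ p)
    (F : Ed d → Ed (d + 1)) (hF : MemLp F (ENNReal.ofReal p) volume) (x : Ed d)
    (hx : Tendsto (fun r => ⨍ y in Metric.ball x r, ‖F y - F x‖ ∂volume) (𝓝[>] (0 : ℝ)) (𝓝 0)) :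
    Tendsto (fun t => pConv d t F x) (𝓝[>] (0 : ℝ)) (𝓝 (F x)) := by
  have hms : AEStronglyMeasurable (fun y => F (x - y)) volume :=
    hF.aestronglyMeasurable.comp_quasiMeasurePreserving
      (quasiMeasurePreserving_sub_left volume x)
  have hloc : LocallyIntegrable F volume := hF.locallyIntegrable (by simpa using hp)
  set V : ℝ≥0∞ := volume (Metric.ball (0 : Ed d) 1)
  have hV : V ≠ ⊤ := measure_ball_lt_top.ne
  have hmain : Tendsto (fun t => ∫⁻ y, ENNReal.ofReal (phi d t y) * ‖F (x - y) - F x‖ₑ)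
      (𝓝[>] (0:ℝ)) (𝓝 0) := by
    refine tendsto_phi d _ (phi_lintegral_ne_top d 1 one_pos p hp F hF x) fun ε hε => ?_
    obtain ⟨η, hη, hη2⟩ := ENNReal.exists_nnreal_pos_mul_lt
      (a := V * ENNReal.ofReal (2 ^ (d + 2))) (b := ε) (by finiteness) hε.ne'
    have h1 : ∀ᶠ r in 𝓝[>] (0:ℝ), ⨍ y in Metric.ball x r, ‖F y - F x‖ ∂volume < η :=
      hx.eventually_lt_const (by exact_mod_cast hη)
    obtain ⟨δ, hδ, hδ2⟩ := mem_nhdsGT_iff_exists_Ioc_subset.1 h1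
    have hδ : 0 < δ := hδ
    refine ⟨min δ 1, lt_min hδ one_pos, min_le_right _ _, fun t ht => ?_⟩
    refine (dyadic_bound d _ (hms.sub aestronglyMeasurable_const).enorm (min δ 1)
      (lt_min hδ one_pos) (η * V) ?_ t ht).trans ?_
    · intro r hr hr2
      have h2 : ⨍ y in Metric.ball x r, ‖F y - F x‖ ∂volume < η :=
        hδ2 ⟨hr, hr2.trans (min_le_left _ _)⟩
      simp only [Pi.sub_apply]
      rw [ball_shift]
      have hint : IntegrableOn (fun y => ‖F y - F x‖) (Metric.ball x r) volume := by
        have h3 : IntegrableOn F (Metric.ball x r) volume :=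
          (hloc.integrableOn_isCompact (isCompact_closedBall x r)).mono_set Metric.ball_subset_closedBall
        exact (h3.sub (integrableOn_const measure_ball_lt_top.ne)).norm
      have h4 : ∫⁻ y in Metric.ball x r, ‖F y - F x‖ₑ
          = ENNReal.ofReal (∫ y in Metric.ball x r, ‖F y - F x‖) := by
        rw [ofReal_integral_eq_lintegral_ofReal hint (Eventually.of_forall fun y => norm_nonneg _)]
        simp only [ofReal_norm]
      have hvol : volume (Metric.ball x r) = ENNReal.ofReal (r ^ d) * V := by
        have := Measure.addHaar_ball_of_pos (volume : Measure (Ed d)) x hr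
        simpa using this
      have hvpos : 0 < volume.real (Metric.ball x r) :=
        ENNReal.toReal_pos (Metric.measure_ball_pos volume x hr).ne' measure_ball_lt_top.ne
      rw [setAverage_eq, smul_eq_mul, inv_mul_lt_iff₀ hvpos] at h2
      rw [h4]
      calc _ ≤ ENNReal.ofReal (volume.real (Metric.ball x r) * η) := ENNReal.ofReal_le_ofReal h2.le
        _ = volume (Metric.ball x r) * η := by
          rw [ENNReal.ofReal_mul hvpos.le, ofReal_measureReal, ENNReal.ofReal_coe_nnreal]
        _ ≤ _ := by rw [hvol]; apply le_of_eq; ring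
    · rw [mul_assoc]; exact hη2.le
  rw [tendsto_iff_edist_tendsto_0]
  set C := ENNReal.ofReal (((d:ℝ) + 1) * ((d + 1) * kc d))
  have h5 := ENNReal.Tendsto.const_mul (a := C) hmain (Or.inr ENNReal.ofReal_ne_top)
  rw [mul_zero] at h5
  refine tendsto_of_tendsto_of_tendsto_of_le_of_le' tendsto_const_nhds h5
    (Eventually.of_forall fun _ => zero_le) ?_
  filter_upwards [self_mem_nhdsWithin] with t ht
  rw [edist_eq_enorm_sub]
  exact key_est d t ht p hp F hF x

lemma translation_cont (d : ℕ) (p : ℝ) (hp : 1 ≤ p) {m : ℕ}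
    (F : Ed d → Ed m) (hF : MemLp F (ENNReal.ofReal p) volume) :
    Tendsto (fun y => eLpNorm (fun x => F (x - y) - F x) (ENNReal.ofReal p) volume)
      (𝓝 (0 : Ed d)) (𝓝 0) := by
  have : Fact (1 ≤ ENNReal.ofReal p) := ⟨by simpa using hp⟩
  let g : C(Ed d, C(Ed d, Ed d)) := (ContinuousMap.mk (fun a : Ed d × Ed d => a.2 - a.1)
    (by fun_prop)).curry
  have hgm : ∀ y, MeasurePreserving (g y) volume volume := fun y =>
    measurePreserving_sub_right volume y
  have h := Filter.Tendsto.compMeasurePreservingLp (tendsto_const_nhds (x := hF.toLp F))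
    (g.continuous.tendsto 0) hgm (hgm 0) ENNReal.ofReal_ne_top
  rw [Lp.tendsto_Lp_iff_tendsto_eLpNorm'] at h
  refine h.congr fun y => eLpNorm_congr_ae ?_
  have e1 := Lp.coeFn_compMeasurePreserving (hF.toLp F) (hgm y)
  have e2 := Lp.coeFn_compMeasurePreserving (hF.toLp F) (hgm 0)
  have e3 := (hgm y).quasiMeasurePreserving.ae_eq_comp hF.coeFn_toLp
  have e4 := (hgm 0).quasiMeasurePreserving.ae_eq_comp hF.coeFn_toLp
  filter_upwards [e1, e2, e3, e4] with x h1 h2 h3 h4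
  rw [Pi.sub_apply, h1, h2, h3, h4]
  simp [g]

lemma jensen (d : ℕ) (t : ℝ) (ht : 0 < t) (p : ℝ) (hp : 1 ≤ p) {m : ℕ}
    (f : Ed d → Ed m) (hf : AEStronglyMeasurable f volume) :
    (∫⁻ y, ENNReal.ofReal (phi d t y) * ‖f y‖ₑ) ^ p ≤
      (∫⁻ y, ENNReal.ofReal (phi d t y) * ‖f y‖ₑ ^ p) * (phiMass d ^ (1 / 1 - 1 / p)) ^ p := by
  have hφm : Measurable (fun y => ENNReal.ofReal (phi d t y)) := (phi_meas d t).ennreal_ofReal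
  set ν := (volume : Measure (Ed d)).withDensity (fun y => ENNReal.ofReal (phi d t y))
  have hν : ν univ = phiMass d := by
    rw [withDensity_apply _ MeasurableSet.univ, Measure.restrict_univ, phi_lintegral d t ht]
  have hfν : AEStronglyMeasurable f ν := hf.mono_ac (withDensity_absolutelyContinuous _ _)
  have h := eLpNorm'_le_eLpNorm'_mul_rpow_measure_univ one_pos hp hfν
  rw [hν, eLpNorm'_eq_lintegral_enorm, eLpNorm'_eq_lintegral_enorm,
    lintegral_withDensity_eq_lintegral_mul_non_measurable₀ _ hφm.aemeasurable
      (Eventually.of_forall fun _ => ENNReal.ofReal_lt_top),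
    lintegral_withDensity_eq_lintegral_mul_non_measurable₀ _ hφm.aemeasurable
      (Eventually.of_forall fun _ => ENNReal.ofReal_lt_top)] at h
  simp only [Pi.mul_apply, ENNReal.rpow_one, div_one] at h
  have hp0 : 0 < p := by linarith
  have h2 := ENNReal.rpow_le_rpow h hp0.le
  rw [ENNReal.mul_rpow_of_nonneg _ _ hp0.le, ← ENNReal.rpow_mul, one_div_mul_cancel hp0.ne',
    ENNReal.rpow_one] at h2
  simpa using h2

lemma Lp_conv_meas (d : ℕ) (p : ℝ) (hp : 1 ≤ p)
    (F : Ed d → Ed (d + 1)) (hF : MemLp F (ENNReal.ofReal p) volume) (hFm : StronglyMeasurable F) :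
    Tendsto (fun t => eLpNorm (fun x => pConv d t F x - F x) (ENNReal.ofReal p) volume)
      (𝓝[>] (0 : ℝ)) (𝓝 0) := by
  have hp0 : 0 < p := by linarith
  have hP0 : ENNReal.ofReal p ≠ 0 := by simpa using hp0
  have hnorm : ∀ f : Ed d → Ed (d + 1), eLpNorm f (ENNReal.ofReal p) volume
      = (∫⁻ x, ‖f x‖ₑ ^ p) ^ (1 / p) := by
    intro f
    rw [eLpNorm_eq_lintegral_rpow_enorm_toReal hP0 ENNReal.ofReal_ne_top,
      ENNReal.toReal_ofReal hp0.le]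
  set w : Ed d → ℝ≥0∞ := fun y => ∫⁻ x, ‖F (x - y) - F x‖ₑ ^ p
  have hw : ∀ y, w y = (eLpNorm (fun x => F (x - y) - F x) (ENNReal.ofReal p) volume) ^ p := by
    intro y
    rw [hnorm, ← ENNReal.rpow_mul, one_div_mul_cancel hp0.ne', ENNReal.rpow_one]
  have hw0 : Tendsto w (𝓝 0) (𝓝 0) := by
    have h1 := ((ENNReal.continuous_rpow_const (y := p)).tendsto 0).comp (translation_cont d p hp F hF)
    rw [ENNReal.zero_rpow_of_pos hp0] at h1
    exact h1.congr fun y => (hw y).symm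
  set N := eLpNorm F (ENNReal.ofReal p) volume
  have hN : N ≠ ⊤ := hF.eLpNorm_ne_top
  have hwb : ∀ y, w y ≤ (N + N) ^ p := by
    intro y
    rw [hw]
    have hmp := measurePreserving_sub_right (volume : Measure (Ed d)) y
    have h1 : eLpNorm (fun x => F (x - y)) (ENNReal.ofReal p) volume = N :=
      eLpNorm_comp_measurePreserving hF.aestronglyMeasurable hmp
    have h2 := eLpNorm_sub_le (hF.comp_measurePreserving hmp).aestronglyMeasurable
      hF.aestronglyMeasurable (p := ENNReal.ofReal p) (by simpa using hp)
    refine ENNReal.rpow_le_rpow (h2.trans (le_of_eq ?_)) hp0.le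
    exact congrArg (· + N) h1
  have hM : phiMass d ≠ ⊤ := ENNReal.ofReal_ne_top
  have hmain : Tendsto (fun t => ∫⁻ y, ENNReal.ofReal (phi d t y) * w y) (𝓝[>] (0:ℝ)) (𝓝 0) := by
    refine tendsto_phi d w ?_ ?_
    · refine ne_of_lt (lt_of_le_of_lt (lintegral_mono (fun y => mul_le_mul_right (hwb y) _)) ?_)
      rw [lintegral_mul_const' _ _ (by finiteness), phi_lintegral d 1 one_pos]
      finiteness
    · intro ε hε
      obtain ⟨η, hη, hη2⟩ := ENNReal.exists_nnreal_pos_mul_lt hM hε.ne'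
      have h1 : ∀ᶠ y in 𝓝 (0 : Ed d), w y < η := hw0.eventually_lt_const (by exact_mod_cast hη)
      obtain ⟨δ, hδ, hδ2⟩ := Metric.eventually_nhds_iff_ball.1 h1
      refine ⟨min δ 1, lt_min hδ one_pos, min_le_right _ _, fun t ht => ?_⟩
      calc _ ≤ ∫⁻ y in Metric.ball (0 : Ed d) (min δ 1), ENNReal.ofReal (phi d t y) * η := by
            refine setLIntegral_mono' Metric.isOpen_ball.measurableSet fun y hy => ?_
            gcongr
            exact (hδ2 y (Metric.ball_subset_ball (min_le_left _ _) hy)).le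
        _ ≤ ∫⁻ y, ENNReal.ofReal (phi d t y) * η := setLIntegral_le_lintegral _ _
        _ = phiMass d * η := by
            rw [lintegral_mul_const' _ _ ENNReal.coe_ne_top, phi_lintegral d t ht]
        _ ≤ ε := by rw [mul_comm]; exact hη2.le
  set C := ENNReal.ofReal (((d:ℝ) + 1) * ((d + 1) * kc d))
  set D := C ^ p * (phiMass d ^ (1 / 1 - 1 / p)) ^ p
  have hD : D ≠ ⊤ := by
    have : (0:ℝ) ≤ 1 / 1 - 1 / p := by
      have : 1 / p ≤ 1 := by rw [div_le_one hp0]; exact hp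
      linarith
    have h2 : phiMass d ^ (1 / 1 - 1 / p) ≠ ⊤ := ENNReal.rpow_ne_top_of_nonneg this hM
    exact ENNReal.mul_ne_top (ENNReal.rpow_ne_top_of_nonneg hp0.le ENNReal.ofReal_ne_top)
      (ENNReal.rpow_ne_top_of_nonneg hp0.le h2)
  have hFmeas := hFm.measurable
  have hbound : ∀ t : ℝ, 0 < t → ∫⁻ x, ‖pConv d t F x - F x‖ₑ ^ p
      ≤ D * ∫⁻ y, ENNReal.ofReal (phi d t y) * w y := by
    intro t ht
    have hφm := phi_meas d t
    calc ∫⁻ x, ‖pConv d t F x - F x‖ₑ ^ p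
        ≤ ∫⁻ x, D * ∫⁻ y, ENNReal.ofReal (phi d t y) * ‖F (x - y) - F x‖ₑ ^ p := by
          refine lintegral_mono fun x => ?_
          have hms : AEStronglyMeasurable (fun y => F (x - y) - F x) volume := by
            apply Measurable.aestronglyMeasurable
            fun_prop
          refine (ENNReal.rpow_le_rpow (key_est d t ht p hp F hF x) hp0.le).trans ?_
          rw [ENNReal.mul_rpow_of_nonneg _ _ hp0.le]
          refine (mul_le_mul_right (jensen d t ht p hp _ hms) _).trans (le_of_eq ?_)
          simp only [D]; ring
      _ = D * ∫⁻ x, ∫⁻ y, ENNReal.ofReal (phi d t y) * ‖F (x - y) - F x‖ₑ ^ p :=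
          lintegral_const_mul' _ _ hD
      _ = D * ∫⁻ y, ∫⁻ x, ENNReal.ofReal (phi d t y) * ‖F (x - y) - F x‖ₑ ^ p := by
          rw [lintegral_lintegral_swap]
          apply Measurable.aemeasurable
          fun_prop
      _ = _ := by
          congr 1
          refine lintegral_congr fun y => ?_
          rw [lintegral_const_mul' _ _ ENNReal.ofReal_ne_top]
  have h6 := ENNReal.Tendsto.const_mul (a := D) hmain (Or.inr hD)
  rw [mul_zero] at h6
  have h7 : Tendsto (fun t => ∫⁻ x, ‖pConv d t F x - F x‖ₑ ^ p) (𝓝[>] (0:ℝ)) (𝓝 0) := by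
    refine tendsto_of_tendsto_of_tendsto_of_le_of_le' tendsto_const_nhds h6
      (Eventually.of_forall fun _ => zero_le) ?_
    filter_upwards [self_mem_nhdsWithin] with t ht
    exact hbound t ht
  have h8 := ((ENNReal.continuous_rpow_const (y := 1 / p)).tendsto 0).comp h7
  rw [ENNReal.zero_rpow_of_pos (by positivity)] at h8
  exact h8.congr fun t => (hnorm _).symm

lemma Lp_conv (d : ℕ) (p : ℝ) (hp : 1 ≤ p)
    (F : Ed d → Ed (d + 1)) (hF : MemLp F (ENNReal.ofReal p) volume) :
    Tendsto (fun t => eLpNorm (fun x => pConv d t F x - F x) (ENNReal.ofReal p) volume)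
      (𝓝[>] (0 : ℝ)) (𝓝 0) := by
  set G := hF.aestronglyMeasurable.mk F
  have hFG : F =ᵐ[volume] G := hF.aestronglyMeasurable.ae_eq_mk
  have hG : MemLp G (ENNReal.ofReal p) volume := (memLp_congr_ae hFG).1 hF
  refine (Lp_conv_meas d p hp G hG hF.aestronglyMeasurable.stronglyMeasurable_mk).congr fun t => ?_
  have hpc : ∀ x, pConv d t F x = pConv d t G x := by
    intro x
    unfold pConv
    congr 1
    ext i
    refine integral_congr_ae ?_
    filter_upwards [(quasiMeasurePreserving_sub_left volume x).ae_eq_comp hFG] with y hy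
    have hy : F (x - y) = G (x - y) := hy
    simp only [hy]
  refine eLpNorm_congr_ae ?_
  filter_upwards [hFG] with x hx
  rw [hpc, hx]

end PartD

/-- **Approximation-to-the-identity property of the Poisson-type kernel.**
For `1 ≤ p < ∞` and `F ∈ L^p(ℝ^d; ℝ^{d+1})`, `‖(ℙ_t ∗ F) − F‖_{L^p} → 0` as `t → 0⁺`, and
`(ℙ_t ∗ F)(x) → F(x)` as `t → 0⁺` at every Lebesgue point `x` of `F`. -/
theorem pConv_approx_identity (d : ℕ) (p : ℝ) (hp : 1 ≤ p)
    (F : Ed d → Ed (d + 1)) (hF : MemLp F (ENNReal.ofReal p) volume) :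
    Tendsto (fun t => eLpNorm (fun x => pConv d t F x - F x) (ENNReal.ofReal p) volume)
      (𝓝[>] (0 : ℝ)) (𝓝 0) ∧
    ∀ x : Ed d,
      Tendsto (fun r => ⨍ y in Metric.ball x r, ‖F y - F x‖ ∂volume) (𝓝[>] (0 : ℝ)) (𝓝 0) →
      Tendsto (fun t => pConv d t F x) (𝓝[>] (0 : ℝ)) (𝓝 (F x)) := by
  exact ⟨Lp_conv d p hp F hF, fun x hx => lebesgue_point d p hp F hF x hx⟩
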